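/- There is an absolute constant c' > 0 such that the following holds. Let T = (V,E) be a finite tree with n ≥ 2 vertices and maximal degree at most M. Then for every vertex v ∈ V, the expected cover time of the simple random walk started at v satisfies E_v C ≥ c' · n · (log n)² / log(M+2). -/

import Mathlib

open Finset
open scoped ENNReal

/-- Transition probability of the simple random walk on `G`:
from `x`, move to a uniformly chosen neighbor of `x`. -/
noncomputable def stepProb {V : Type*} [Fintype V] (G : SimpleGraph V)
    [DecidableRel G.Adj] (x y : V) : ℝ :=
  if G.Adj x y then ((G.degree x : ℝ))⁻¹ else 0

/-- Probability that the walk follows the finite trajectory `f` (given it starts at `f 0`). -/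
noncomputable def pathProb {V : Type*} [Fintype V] (G : SimpleGraph V)
    [DecidableRel G.Adj] {k : ℕ} (f : Fin (k + 1) → V) : ℝ :=
  ∏ i : Fin k, stepProb G (f i.castSucc) (f i.succ)

/-- `P_u(T_w > k)`: the probability that the walk started at `u` has not visited `w`
by time `k`.  (This is a cylinder event, so it is a finite sum over trajectories.) -/
noncomputable def hitSurvival {V : Type*} [Fintype V] [DecidableEq V] (G : SimpleGraph V)
    [DecidableRel G.Adj] (u w : V) (k : ℕ) : ℝ :=
  ∑ f : Fin (k + 1) → V, if f 0 = u ∧ ∀ i, f i ≠ w then pathProb G f else 0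

/-- `H(u,w) = E_u T_w`, the expected hitting time of `w` for the simple random walk
started at `u`, via `E[T] = ∑_{k≥0} P(T > k)`. -/
noncomputable def expHit {V : Type*} [Fintype V] [DecidableEq V] (G : SimpleGraph V)
    [DecidableRel G.Adj] (u w : V) : ℝ≥0∞ :=
  ∑' k : ℕ, ENNReal.ofReal (hitSurvival G u w k)

/-- `P_v(C > k)`: the probability that the walk started at `v` has not visited every
vertex by time `k`, i.e. `max_w T_w > k`. -/
noncomputable def coverSurvival {V : Type*} [Fintype V] [DecidableEq V] (G : SimpleGraph V)
    [DecidableRel G.Adj] (v : V) (k : ℕ) : ℝ :=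
  ∑ f : Fin (k + 1) → V, if f 0 = v ∧ ∃ w, ∀ i, f i ≠ w then pathProb G f else 0

/-- `E_v C`, the expected cover time of the simple random walk started at `v`,
via `E[C] = ∑_{k≥0} P(C > k)`. -/
noncomputable def expCover {V : Type*} [Fintype V] [DecidableEq V] (G : SimpleGraph V)
    [DecidableRel G.Adj] (v : V) : ℝ≥0∞ :=
  ∑' k : ℕ, ENNReal.ofReal (coverSurvival G v k)

/-- `(z, rad)` is a circle packing for `G`: a family of closed round disks
(`C_v` has center `z v` and radius `rad v > 0`) with pairwise disjoint interiors,
such that for `u ≠ v`, `C_u ∩ C_v ≠ ∅` iff `{u,v}` is an edge of `G`. -/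
def IsCirclePacking {V : Type*} (G : SimpleGraph V)
    (z : V → EuclideanSpace ℝ (Fin 2)) (rad : V → ℝ) : Prop :=
  (∀ v, 0 < rad v) ∧
  (∀ u v : V, u ≠ v →
    interior (Metric.closedBall (z u) (rad u)) ∩
      interior (Metric.closedBall (z v) (rad v)) = ∅) ∧
  (∀ u v : V, u ≠ v →
    ((Metric.closedBall (z u) (rad u) ∩ Metric.closedBall (z v) (rad v)).Nonempty ↔ G.Adj u v))

/-- `G` admits a circle packing (equivalently, by Koebe's theorem, `G` is planar). -/
def HasCirclePacking {V : Type*} (G : SimpleGraph V) : Prop :=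
  ∃ z rad, IsCirclePacking G z rad

/-!
Matthews' argument bounds the expected cover time of a set of vertices from below by the logarithm
of its cardinality times the least expected hitting time between two of its members. In a tree on
`n` vertices the expected hitting times are explicit: if `D x` is the sum of the distances from `x`,
then `w` is hit from `x` after `(n - 1) * dist x w + D w - D x` steps on average, because the
Laplacian of `dist z` at `x` is `degree x - 2`, except for `degree x` at `x = z`.

Let `ρ` minimize `D`. At least half of the vertices `w` satisfy `dist v w = dist v ρ + dist ρ w`,
and each of them takes at least `(n - 1) * dist ρ w` steps to hit from `v`. If one of them is at
distance `R ≈ n ^ (1 / 4)` or more from `ρ`, hitting it is already slow enough. Otherwise `D` varies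
by at most `(n - 1) * R` on them, so it is constant up to `(n - 1) / 2` on a subset with at least
`n / (4 * R)` members. A ball of radius `k ≈ log n / (4 * log (M + 2))` has at most
`(M + 1) ^ k ≤ n ^ (1 / 4)` vertices, so this subset contains at least `n ^ (1 / 2) / 8` vertices at
mutual distances greater than `k`, to which Matthews' bound applies with hitting times at least
`(n - 1) * (k + 1) / 2`.
-/

section MarkovChain

variable {α : Type*} [DecidableEq α] (P : α → PMF α)

/-- `coverTail P k S v` is the probability that the Markov chain with transition kernel `P`,
started at `v`, has not visited all of `S` by time `k`. The recursion conditions on the first step,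
so the set in play is always the part of `S` that is still to be visited. -/
noncomputable def coverTail : ℕ → Finset α → α → ℝ≥0∞
  | 0, S, v => if S ⊆ {v} then 0 else 1
  | k + 1, S, v => ∑' u, P v u * coverTail k (S.erase v) u

/-- The expected time at which the Markov chain with transition kernel `P`, started at `v`, has
visited all of `S`. For `S = {w}` this is the expected hitting time of `w`. -/
noncomputable def meanCover (S : Finset α) (v : α) : ℝ≥0∞ := ∑' k, coverTail P k S v

lemma coverTail_mono (k : ℕ) {S T : Finset α} (h : S ⊆ T) (v : α) :
    coverTail P k S v ≤ coverTail P k T v := by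
  induction k generalizing S T v with
  | zero =>
    by_cases hT : T ⊆ {v}
    · simp [coverTail, h.trans hT]
    · simp only [coverTail, if_neg hT]
      split_ifs <;> simp
  | succ k ih =>
    exact ENNReal.tsum_le_tsum fun u ↦ mul_le_mul_right (ih (erase_subset_erase v h) u) _

lemma coverTail_erase (k : ℕ) (S : Finset α) (v : α) :
    coverTail P k (S.erase v) v = coverTail P k S v := by
  have hsub : S.erase v ⊆ {v} ↔ S ⊆ {v} := by grind
  cases k <;> simp [coverTail, hsub]

lemma coverTail_empty (k : ℕ) (v : α) : coverTail P k ∅ v = 0 := by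
  induction k generalizing v with
  | zero => simp [coverTail]
  | succ k ih => simp [coverTail, ih]

lemma coverTail_zero_of_not_subset {S : Finset α} {v : α} (h : ¬S ⊆ {v}) :
    coverTail P 0 S v = 1 := if_neg h

lemma coverTail_succ_of_notMem (k : ℕ) {S : Finset α} {v : α} (hv : v ∉ S) :
    coverTail P (k + 1) S v = ∑' u, P v u * coverTail P k S u := by
  rw [coverTail, erase_eq_of_notMem hv]

lemma meanCover_mono {S T : Finset α} (h : S ⊆ T) (v : α) : meanCover P S v ≤ meanCover P T v :=
  ENNReal.tsum_le_tsum fun k ↦ coverTail_mono P k h v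

lemma meanCover_erase (S : Finset α) (v : α) : meanCover P (S.erase v) v = meanCover P S v :=
  tsum_congr fun k ↦ coverTail_erase P k S v

lemma meanCover_empty (v : α) : meanCover P ∅ v = 0 := by
  simp [meanCover, coverTail_empty]

lemma one_le_meanCover {S : Finset α} {v : α} (h : ¬S ⊆ {v}) : 1 ≤ meanCover P S v :=
  (coverTail_zero_of_not_subset P h).symm.le.trans (ENNReal.le_tsum 0)

lemma meanCover_eq_one_add {S : Finset α} {v : α} (hS : S.Nonempty) (hv : v ∉ S) :
    meanCover P S v = 1 + ∑' u, P v u * meanCover P S u := by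
  have hsub : ¬S ⊆ {v} := fun h ↦ by
    obtain ⟨w, hw⟩ := hS
    exact hv (mem_singleton.1 (h hw) ▸ hw)
  rw [meanCover, tsum_eq_zero_add' ENNReal.summable, coverTail_zero_of_not_subset P hsub]
  simp_rw [coverTail_succ_of_notMem P _ hv, meanCover, ← ENNReal.tsum_mul_left]
  rw [ENNReal.tsum_comm]

lemma mul_meanCover_add_mul_coverTail_succ {S : Finset α} {v : α} (hS : S.Nonempty) (hv : v ∉ S)
    (a b : ℝ≥0∞) (k : ℕ) :
    a * meanCover P S v + b * coverTail P (k + 1) S v =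
      a + ∑' u, P v u * (a * meanCover P S u + b * coverTail P k S u) := by
  simp_rw [meanCover_eq_one_add P hS hv, coverTail_succ_of_notMem P k hv, mul_add,
    ENNReal.tsum_add, mul_left_comm (P v _), ENNReal.tsum_mul_left, mul_one, add_assoc]

/-- If the expected cover time is finite then its tail probabilities tend to zero. -/
lemma le_mul_meanCover_of_forall_le_add {S : Finset α} {v : α} {a b c : ℝ≥0∞} (hb : b ≠ ⊤)
    (hc : c ≠ 0) (h : ∀ k, a ≤ c * meanCover P S v + b * coverTail P k S v) :
    a ≤ c * meanCover P S v := by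
  by_cases htop : meanCover P S v = ⊤
  · simp [htop, ENNReal.mul_top hc]
  have htail : Filter.Tendsto (coverTail P · S v) Filter.atTop (nhds 0) :=
    ENNReal.tendsto_atTop_zero_of_tsum_ne_top htop
  have hlim := (ENNReal.Tendsto.const_mul htail (.inr hb)).const_add (c * meanCover P S v)
  simpa using ge_of_tendsto' hlim h

theorem le_meanCover_singleton {w : α} {g : α → ℝ≥0∞} {C : ℝ≥0∞} (hC : C ≠ ⊤) (hgC : ∀ x, g x ≤ C)
    (hgw : g w = 0) (hg : ∀ x ≠ w, g x ≤ 1 + ∑' u, P x u * g u) (x : α) :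
    g x ≤ meanCover P {w} x := by
  have hbound : ∀ k x, g x ≤ 1 * meanCover P {w} x + C * coverTail P k {w} x := by
    intro k
    induction k with
    | zero =>
      intro x
      obtain rfl | hx := eq_or_ne x w
      · simp [hgw]
      · rw [coverTail_zero_of_not_subset P (by simpa using hx.symm), mul_one]
        exact (hgC x).trans le_add_self
    | succ k ih =>
      intro x
      obtain rfl | hx := eq_or_ne x w
      · simp [hgw]
      · rw [mul_meanCover_add_mul_coverTail_succ P (singleton_nonempty w) (by simpa using hx)]
        refine (hg x hx).trans ?_
        gcongr with u
        exact ih u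
  simpa using le_mul_meanCover_of_forall_le_add P hC one_ne_zero (hbound · x)

lemma sum_meanCover_erase {S : Finset α} {v : α} (hv : v ∈ S) :
    ∑ z ∈ S, meanCover P (S.erase z) v =
      meanCover P S v + ∑ z ∈ S.erase v, meanCover P ((S.erase v).erase z) v := by
  rw [← add_sum_erase S _ hv, meanCover_erase]
  congr 1
  refine sum_congr rfl fun z _ ↦ ?_
  rw [erase_right_comm, meanCover_erase]

lemma sum_meanCover_erase_eq_card_add {S : Finset α} {v : α} (hS : 1 < #S) (hv : v ∉ S) :
    ∑ z ∈ S, meanCover P (S.erase z) v =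
      #S + ∑' u, P v u * ∑ z ∈ S, meanCover P (S.erase z) u := by
  have hstep : ∀ z ∈ S, meanCover P (S.erase z) v =
      1 + ∑' u, P v u * meanCover P (S.erase z) u := fun _ _ ↦
    meanCover_eq_one_add P ((one_lt_card_iff_nontrivial.1 hS).erase_nonempty)
      fun h ↦ hv (mem_of_mem_erase h)
  simp_rw [sum_congr rfl hstep, sum_add_distrib, mul_sum,
    Summable.tsum_finsetSum fun _ _ ↦ ENNReal.summable]
  simp

variable {A : Finset α} {b : ℝ≥0∞}

lemma add_sum_meanCover_erase_le_add_coverTail_succ {S : Finset α} {v : α} {k : ℕ} (hS : 1 < #S)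
    (hv : v ∉ S)
    (h : ∀ u, b + ∑ z ∈ S, meanCover P (S.erase z) u ≤
      #S * meanCover P S u + b * coverTail P k S u) :
    b + ∑ z ∈ S, meanCover P (S.erase z) v ≤
      #S * meanCover P S v + b * coverTail P (k + 1) S v := calc
  _ = #S + ∑' u, P v u * (b + ∑ z ∈ S, meanCover P (S.erase z) u) := by
    simp_rw [sum_meanCover_erase_eq_card_add P hS hv, mul_add, ENNReal.tsum_add,
      ENNReal.tsum_mul_right, (P v).tsum_coe, one_mul, add_left_comm]
  _ ≤ #S + ∑' u, P v u * (#S * meanCover P S u + b * coverTail P k S u) := by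
    gcongr _ + ∑' u, _ * ?_ with u
    exact h u
  _ = _ := (mul_meanCover_add_mul_coverTail_succ P (card_pos.1 (by omega)) hv _ _ k).symm

lemma add_sum_meanCover_erase_le_add_coverTail
    (hb : (A : Set α).Pairwise fun y z ↦ b ≤ meanCover P {z} y) (k : ℕ) {S : Finset α} (hSA : S ⊆ A)
    (hS : 1 < #S) (v : α) :
    b + ∑ z ∈ S, meanCover P (S.erase z) v ≤ #S * meanCover P S v + b * coverTail P k S v := by
  induction k generalizing S v with
  | zero =>
    have hsub : ¬S ⊆ {v} := fun h ↦ by simpa using hS.trans_le (card_le_card h)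
    rw [coverTail_zero_of_not_subset P hsub, mul_one, add_comm]
    gcongr
    rw [← nsmul_eq_mul]
    exact sum_le_card_nsmul _ _ _ fun z _ ↦ meanCover_mono P (erase_subset z S) v
  | succ k ih =>
    by_cases hv : v ∈ S
    · have hcard : #S = #(S.erase v) + 1 := (card_erase_add_one hv).symm
      have herase : b + ∑ z ∈ S.erase v, meanCover P ((S.erase v).erase z) v ≤
          #(S.erase v) * meanCover P (S.erase v) v + b * coverTail P (k + 1) (S.erase v) v := by
        obtain hone | hlt := (show 1 ≤ #(S.erase v) by omega).eq_or_lt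
        · obtain ⟨z, hz⟩ := card_eq_one.1 hone.symm
          have hzS : z ∈ S.erase v := by simp [hz]
          have := hb (hSA hv) (hSA (mem_of_mem_erase hzS)) (ne_of_mem_erase hzS).symm
          simpa [hz, meanCover_empty] using this.trans le_self_add
        · exact add_sum_meanCover_erase_le_add_coverTail_succ P hlt (notMem_erase v S)
            fun u ↦ ih ((erase_subset v S).trans hSA) hlt u
      rw [meanCover_erase, coverTail_erase] at herase
      rw [sum_meanCover_erase P hv, hcard, add_left_comm, Nat.cast_succ, add_one_mul,
        add_right_comm, add_comm (_ + _)]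
      gcongr
    · exact add_sum_meanCover_erase_le_add_coverTail_succ P hS hv (ih hSA hS)

/-- The cover times of `S` and of `S.erase z` differ only if `z` is the last vertex of `S` to be
visited. This happens for exactly one `z`, and reaching it then costs `b` more on average. -/
lemma add_sum_meanCover_erase_le (hbtop : b ≠ ⊤)
    (hb : (A : Set α).Pairwise fun y z ↦ b ≤ meanCover P {z} y) {S : Finset α} (hSA : S ⊆ A)
    (hS : 1 < #S) (v : α) :
    b + ∑ z ∈ S, meanCover P (S.erase z) v ≤ #S * meanCover P S v :=
  le_mul_meanCover_of_forall_le_add P hbtop (by exact_mod_cast (zero_lt_one.trans hS).ne')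
    fun k ↦ add_sum_meanCover_erase_le_add_coverTail P hb k hSA hS v

lemma succ_mul_ofReal_harmonic_succ (s : ℕ) :
    (s + 1 : ℕ) * ENNReal.ofReal (harmonic (s + 1)) =
      (s + 1 : ℕ) * ENNReal.ofReal (harmonic s) + 1 := by
  have hnonneg : (0 : ℝ) ≤ harmonic s :=
    mod_cast sum_nonneg fun i _ ↦ inv_nonneg.2 (Nat.cast_nonneg (i + 1))
  have hrec : ((s + 1 : ℕ) : ℝ) * harmonic (s + 1) = (s + 1 : ℕ) * harmonic s + 1 := by
    rw [harmonic_succ]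
    push_cast
    field_simp
  rw [← ENNReal.ofReal_natCast, ← ENNReal.ofReal_mul (by positivity),
    ← ENNReal.ofReal_mul (by positivity), ← ENNReal.ofReal_one,
    ← ENNReal.ofReal_add (by positivity) zero_le_one, hrec]

/-- **Matthews' lower bound** for the expected cover time. -/
theorem mul_harmonic_le_meanCover_add (hbtop : b ≠ ⊤)
    (hb : (A : Set α).Pairwise fun y z ↦ b ≤ meanCover P {z} y) (v : α) :
    b * ENNReal.ofReal (harmonic #A) ≤ meanCover P A v + b := by
  suffices h : ∀ s, ∀ S ⊆ A, #S = s →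
      b * ENNReal.ofReal (harmonic s) ≤ meanCover P S v + b from h _ A Subset.rfl rfl
  intro s
  induction s with
  | zero => simp
  | succ s ih =>
    intro S hSA hS
    obtain rfl | hs := s.eq_zero_or_pos
    · simp [harmonic]
    have hrec : ∑ _z ∈ S, b * ENNReal.ofReal (harmonic s) ≤
        ∑ z ∈ S, (meanCover P (S.erase z) v + b) := sum_le_sum fun z hz ↦
      ih _ ((erase_subset z S).trans hSA) (by rw [card_erase_of_mem hz, hS, Nat.add_sub_cancel])
    rw [← ENNReal.mul_le_mul_iff_right (a := (s + 1 : ℕ)) (by simp) (by simp)]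
    calc (s + 1 : ℕ) * (b * ENNReal.ofReal (harmonic (s + 1)))
        = ∑ _z ∈ S, b * ENNReal.ofReal (harmonic s) + b := by
          rw [mul_left_comm, succ_mul_ofReal_harmonic_succ, sum_const, hS, nsmul_eq_mul,
            mul_add, mul_one, mul_left_comm]
      _ ≤ b + ∑ z ∈ S, meanCover P (S.erase z) v + (s + 1 : ℕ) * b := by
          rw [sum_add_distrib, sum_const (b := b), hS, nsmul_eq_mul] at hrec
          grw [hrec]
          exact (by ring : _ = _).le
      _ ≤ (s + 1 : ℕ) * (meanCover P S v + b) := by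
          rw [mul_add, ← hS]
          gcongr
          exact add_sum_meanCover_erase_le P hbtop hb hSA (by omega) v

theorem mul_log_card_le_meanCover (hbtop : b ≠ ⊤)
    (hb : (A : Set α).Pairwise fun y z ↦ b ≤ meanCover P {z} y) (v : α) :
    b * ENNReal.ofReal (Real.log (#A + 1) - 1) ≤ meanCover P A v := by
  have hlog : Real.log (#A + 1) ≤ harmonic #A := mod_cast log_add_one_le_harmonic #A
  rw [ENNReal.ofReal_sub _ zero_le_one, ENNReal.ofReal_one, ENNReal.mul_sub fun _ _ ↦ hbtop,
    mul_one, tsub_le_iff_right]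
  grw [hlog]
  exact mul_harmonic_le_meanCover_add P hbtop hb v

end MarkovChain

section SimpleRandomWalk

variable {V : Type*} [Fintype V] (G : SimpleGraph V) [DecidableRel G.Adj]

/-- The transition kernel of the simple random walk on a graph without isolated vertices. -/
noncomputable def simpleWalk (hG : ∀ x, 0 < G.degree x) (x : V) : PMF V :=
  PMF.uniformOfFinset (G.neighborFinset x) (card_pos.1 (hG x))

variable {G} (hG : ∀ x, 0 < G.degree x)

lemma ofReal_stepProb (x y : V) : ENNReal.ofReal (stepProb G x y) = simpleWalk G hG x y := by
  simp only [stepProb, simpleWalk, PMF.uniformOfFinset_apply, SimpleGraph.mem_neighborFinset,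
    SimpleGraph.card_neighborFinset_eq_degree]
  split_ifs
  · rw [ENNReal.ofReal_inv_of_pos (mod_cast hG x), ENNReal.ofReal_natCast]
  · exact ENNReal.ofReal_zero

lemma tsum_simpleWalk_mul_ofReal {g : V → ℝ} (hg : ∀ u, 0 ≤ g u) (x : V) :
    ∑' u, simpleWalk G hG x u * ENNReal.ofReal (g u) =
      ENNReal.ofReal ((G.degree x : ℝ)⁻¹ * ∑ u ∈ G.neighborFinset x, g u) := by
  simp_rw [tsum_fintype, ← ofReal_stepProb hG, ← ENNReal.ofReal_mul' (hg _), stepProb, ite_mul,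
    zero_mul]
  rw [← ENNReal.ofReal_sum_of_nonneg fun u _ ↦ by have := hg u; split_ifs <;> positivity,
    ← sum_filter, mul_sum, SimpleGraph.neighborFinset_eq_filter]

lemma stepProb_nonneg (x y : V) : 0 ≤ stepProb G x y := by
  unfold stepProb
  split_ifs <;> positivity

lemma pathProb_nonneg {k : ℕ} (f : Fin (k + 1) → V) : 0 ≤ pathProb G f :=
  prod_nonneg fun _ _ ↦ stepProb_nonneg _ _

lemma pathProb_cons {k : ℕ} (v : V) (f : Fin (k + 1) → V) :
    pathProb G (Fin.cons v f : Fin (k + 2) → V) = stepProb G v (f 0) * pathProb G f := by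
  simp [pathProb, Fin.prod_univ_succ]

variable [DecidableEq V]

variable (G) in
/-- The total probability of the trajectories of length `k` from `v` that miss a vertex of `S`;
the generalization of `coverSurvival` from the whole vertex set to a set `S`. -/
noncomputable def missProb (k : ℕ) (S : Finset V) (v : V) : ℝ :=
  ∑ f : Fin (k + 1) → V, if f 0 = v ∧ ∃ w ∈ S, ∀ i, f i ≠ w then pathProb G f else 0

lemma coverSurvival_eq_missProb (v : V) (k : ℕ) :
    coverSurvival G v k = missProb G k univ v := by
  simp [coverSurvival, missProb]

lemma missProb_nonneg (k : ℕ) (S : Finset V) (v : V) : 0 ≤ missProb G k S v :=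
  sum_nonneg fun f _ ↦ by split_ifs <;> simp [pathProb_nonneg]

lemma missProb_zero (S : Finset V) (v : V) : missProb G 0 S v = if S ⊆ {v} then 0 else 1 := by
  have hmiss : (∃ w ∈ S, v ≠ w) ↔ ¬S ⊆ {v} := by grind
  rw [missProb, ← (Equiv.funUnique (Fin 1) V).symm.sum_comp, Fintype.sum_eq_single v
    fun u hu ↦ by simp [hu]]
  simp [pathProb, hmiss, -subset_singleton_iff]

lemma missProb_succ (k : ℕ) (S : Finset V) (v : V) :
    missProb G (k + 1) S v = ∑ u, stepProb G v u * missProb G k (S.erase v) u := by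
  have hmiss (f : Fin (k + 1) → V) :
      (∃ w ∈ S, ∀ i, (Fin.cons v f : Fin (k + 2) → V) i ≠ w) ↔
        ∃ w ∈ S.erase v, ∀ i, f i ≠ w := by
    simp [Fin.forall_fin_succ, and_assoc, and_left_comm, eq_comm]
  calc missProb G (k + 1) S v
      = ∑ f : Fin (k + 1) → V, if ∃ w ∈ S, ∀ i, (Fin.cons v f : Fin (k + 2) → V) i ≠ w then
          pathProb G (Fin.cons v f : Fin (k + 2) → V) else 0 := by
        rw [missProb, ← (Fin.consEquiv fun _ ↦ V).sum_comp, Fintype.sum_prod_type,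
          Fintype.sum_eq_single v fun u hu ↦ by simp [Fin.consEquiv, hu]]
        simp [Fin.consEquiv]
    _ = ∑ f : Fin (k + 1) → V, ∑ u, stepProb G v u *
          if f 0 = u ∧ ∃ w ∈ S.erase v, ∀ i, f i ≠ w then pathProb G f else 0 := by
        simp_rw [hmiss, pathProb_cons, ite_and, mul_ite, mul_zero, sum_ite_eq, mem_univ, if_true]
    _ = ∑ u, stepProb G v u * missProb G k (S.erase v) u := by
        rw [sum_comm]
        simp_rw [missProb, mul_sum]

lemma ofReal_missProb (k : ℕ) (S : Finset V) (v : V) :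
    ENNReal.ofReal (missProb G k S v) = coverTail (simpleWalk G hG) k S v := by
  induction k generalizing S v with
  | zero =>
    rw [missProb_zero, coverTail]
    split_ifs <;> simp
  | succ k ih =>
    rw [missProb_succ, coverTail, tsum_fintype, ENNReal.ofReal_sum_of_nonneg fun u _ ↦
      mul_nonneg (stepProb_nonneg v u) (missProb_nonneg k _ u)]
    refine sum_congr rfl fun u _ ↦ ?_
    rw [ENNReal.ofReal_mul (stepProb_nonneg v u), ih, ofReal_stepProb]

theorem expCover_eq_meanCover (v : V) : expCover G v = meanCover (simpleWalk G hG) univ v :=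
  tsum_congr fun k ↦ by rw [coverSurvival_eq_missProb, ofReal_missProb]

end SimpleRandomWalk

section Distance

variable {V : Type*} {G : SimpleGraph V} {x y₁ y₂ z : V}

lemma exists_adj_dist_eq_add_one (h : G.Reachable z x) (hne : x ≠ z) :
    ∃ y, G.Adj x y ∧ G.dist z x = G.dist z y + 1 := by
  obtain ⟨p, hp⟩ := h.symm.exists_walk_length_eq_dist
  cases p with
  | nil => exact absurd rfl hne
  | @cons _ y _ hadj p =>
    refine ⟨y, hadj, ?_⟩
    have hle := SimpleGraph.dist_le p
    have htri := (hadj.reachable.symm).dist_triangle_right z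
    simp only [SimpleGraph.Walk.length_cons, SimpleGraph.dist_comm (v := z),
      SimpleGraph.dist_eq_one_iff_adj.2 hadj.symm] at hp hle htri
    omega

lemma eq_of_adj_of_dist_eq_add_one (hG : G.IsAcyclic) (h₁ : G.Adj x y₁) (h₂ : G.Adj x y₂)
    (hd₁ : G.dist z x = G.dist z y₁ + 1) (hd₂ : G.dist z x = G.dist z y₂ + 1) : y₁ = y₂ := by
  have hzx : G.Reachable z x := .of_dist_ne_zero (by omega)
  obtain ⟨p₁, hp₁⟩ := (hzx.trans h₁.reachable).symm.exists_walk_length_eq_dist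
  obtain ⟨p₂, hp₂⟩ := (hzx.trans h₂.reachable).symm.exists_walk_length_eq_dist
  have hpath₁ : (SimpleGraph.Walk.cons h₁ p₁).IsPath := SimpleGraph.Walk.isPath_of_length_eq_dist _
    (by simp [hp₁, SimpleGraph.dist_comm (v := z), hd₁])
  have hpath₂ : (SimpleGraph.Walk.cons h₂ p₂).IsPath := SimpleGraph.Walk.isPath_of_length_eq_dist _
    (by simp [hp₂, SimpleGraph.dist_comm (v := z), hd₂])
  have heq := congrArg Subtype.val ((hG.subsingleton_path x z).elim ⟨_, hpath₁⟩ ⟨_, hpath₂⟩)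
  simp only [SimpleGraph.Walk.cons.injEq] at heq
  exact heq.1

lemma dist_eq_add_of_adj_of_dist_eq_add_one (hG : G.IsTree) {v ρ c : V} (hadj : G.Adj ρ c)
    (hv : G.dist v ρ = G.dist v c + 1) (hz : G.dist z c = G.dist z ρ + 1) :
    G.dist v z = G.dist v ρ + G.dist ρ z := by
  induction hk : G.dist v c generalizing ρ c with
  | zero =>
    obtain rfl := hG.connected.dist_eq_zero_iff.1 hk
    rw [SimpleGraph.dist_comm, hz, hv, hk, SimpleGraph.dist_comm, zero_add, add_comm]
  | succ k ih =>
    have hcv : c ≠ v := by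
      rintro rfl
      simp at hk
    obtain ⟨c', hadj', hv'⟩ := exists_adj_dist_eq_add_one (hG.connected v c) hcv
    have hz' : G.dist z c' = G.dist z c + 1 := by
      refine (hG.dist_eq_dist_add_one_of_adj z hadj').resolve_left fun h ↦ ?_
      obtain rfl := eq_of_adj_of_dist_eq_add_one hG.isAcyclic hadj' hadj.symm h hz
      omega
    have := ih hadj' hv' hz' (by omega)
    simp only [SimpleGraph.dist_comm (v := z)] at this hz ⊢
    omega

variable [Fintype V] [DecidableRel G.Adj]

lemma sum_neighborFinset_dist_sub (hG : G.IsTree) [DecidableEq V] (x z : V) :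
    ∑ y ∈ G.neighborFinset x, ((G.dist z y : ℝ) - G.dist z x) =
      G.degree x - if x = z then 0 else 2 := by
  split_ifs with hxz
  · subst hxz
    have hone : ∀ y ∈ G.neighborFinset x, (G.dist x y : ℝ) - G.dist x x = 1 := fun y hy ↦ by
      simp [SimpleGraph.dist_eq_one_iff_adj.2 ((G.mem_neighborFinset x y).1 hy)]
    rw [sum_congr rfl hone]
    simp
  · obtain ⟨p, hp, hpd⟩ := exists_adj_dist_eq_add_one (hG.connected z x) hxz
    have hdiff : ∀ y ∈ G.neighborFinset x,
        (G.dist z y : ℝ) - G.dist z x = 1 - if y = p then 2 else 0 := by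
      intro y hy
      have hadj := (G.mem_neighborFinset x y).1 hy
      split_ifs with hyp
      · rw [hyp, hpd]
        push_cast
        ring
      · rw [(hG.dist_eq_dist_add_one_of_adj z hadj).resolve_left fun h ↦
          hyp (eq_of_adj_of_dist_eq_add_one hG.isAcyclic hadj hp h hpd)]
        push_cast
        ring
    simp [sum_congr rfl hdiff, hp]

lemma card_filter_dist_le_le (hG : G.Connected) {M : ℕ}
    (hM : ∀ v, G.degree v ≤ M) (x : V) (k : ℕ) : #{y | G.dist x y ≤ k} ≤ (M + 1) ^ k := by
  classical
  induction k with
  | zero => simp [hG.dist_eq_zero_iff, filter_eq]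
  | succ k ih =>
    have hsub : ({y | G.dist x y ≤ k + 1} : Finset V) ⊆
        ({y | G.dist x y ≤ k} : Finset V).biUnion fun y ↦ insert y (G.neighborFinset y) := by
      intro y hy
      simp only [mem_filter_univ, mem_biUnion, mem_insert, SimpleGraph.mem_neighborFinset] at hy ⊢
      by_cases hk : G.dist x y ≤ k
      · exact ⟨y, hk, .inl rfl⟩
      · have hne : y ≠ x := by
          rintro rfl
          simp at hk
        obtain ⟨c, hadj, hc⟩ := exists_adj_dist_eq_add_one (hG x y) hne
        exact ⟨c, by omega, .inr hadj.symm⟩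
    have hinsert (y : V) : #(insert y (G.neighborFinset y)) ≤ M + 1 :=
      (card_insert_le _ _).trans (Nat.succ_le_succ (hM y))
    calc #{y | G.dist x y ≤ k + 1}
        ≤ #{y | G.dist x y ≤ k} * (M + 1) :=
          (card_le_card hsub).trans (card_biUnion_le_card_mul _ _ _ fun y _ ↦ hinsert y)
      _ ≤ (M + 1) ^ (k + 1) := Nat.mul_le_mul_right _ ih

end Distance

section Selection

variable {α : Type*}

lemma exists_subset_pairwise_not_and_dominating {r : α → α → Prop} (hrefl : ∀ x, r x x)
    (hsymm : ∀ ⦃x y⦄, r x y → r y x) (U : Finset α) :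
    ∃ A ⊆ U, (A : Set α).Pairwise (fun x y ↦ ¬r x y) ∧ ∀ u ∈ U, ∃ a ∈ A, r a u := by
  classical
  obtain ⟨A, hA⟩ := exists_maximal 
    (s := U.powerset.filter fun A : Finset α ↦ (A : Set α).Pairwise fun x y ↦ ¬r x y) ⟨∅, by simp⟩
  simp only [mem_filter, mem_powerset] at hA
  refine ⟨A, hA.prop.1, hA.prop.2, fun u hu ↦ ?_⟩
  by_contra! hcon
  have huA : u ∉ A := fun h ↦ hcon u h (hrefl u)
  refine huA (hA.le_of_ge (y := insert u A) ⟨insert_subset hu hA.prop.1, ?_⟩ (subset_insert u A)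
    (mem_insert_self u A))
  rw [coe_insert]
  exact hA.prop.2.insert fun a ha _ ↦ ⟨fun h ↦ hcon a ha (hsymm h), hcon a ha⟩

lemma exists_subset_sub_le_of_mem_Ico {U : Finset α} {f : α → ℝ} {a δ : ℝ} {m : ℕ} (hδ : 0 < δ)
    (hf : ∀ x ∈ U, f x ∈ Set.Ico a (a + m * δ)) :
    ∃ S ⊆ U, #U ≤ m * #S ∧ ∀ x ∈ S, ∀ y ∈ S, f x - f y ≤ δ := by
  obtain rfl | ⟨x₀, hx₀⟩ := U.eq_empty_or_nonempty
  · exact ⟨∅, by simp⟩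
  let cell (x : α) : ℕ := ⌊(f x - a) / δ⌋₊
  have hnonneg (x) (hx : x ∈ U) : 0 ≤ (f x - a) / δ :=
    div_nonneg (sub_nonneg.2 (hf x hx).1) hδ.le
  have hcell : ∀ x ∈ U, cell x ∈ range m := fun x hx ↦ by
    rw [mem_range, Nat.floor_lt (hnonneg x hx), div_lt_iff₀ hδ]
    linarith [(hf x hx).2]
  have hm : (0 : ℝ) < m := mod_cast (mem_range.1 (hcell x₀ hx₀)).pos
  obtain ⟨i, -, hi⟩ := exists_le_card_fiber_of_nsmul_le_card_of_maps_to hcell ⟨_, hcell x₀ hx₀⟩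
    (b := (#U / m : ℝ)) (by rw [card_range, nsmul_eq_mul, mul_div_cancel₀ _ hm.ne'])
  refine ⟨{x ∈ U | cell x = i}, filter_subset _ _, ?_, fun x hx y hy ↦ ?_⟩
  · rw [div_le_iff₀' hm] at hi
    exact_mod_cast hi
  · simp only [mem_filter] at hx hy
    have hupper : (f x - a) / δ < i + 1 := hx.2 ▸ Nat.lt_floor_add_one _
    have hlower : i ≤ (f y - a) / δ := hy.2 ▸ Nat.floor_le (hnonneg y hy.1)
    rw [div_lt_iff₀ hδ] at hupper
    rw [le_div_iff₀ hδ] at hlower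
    linarith

end Selection

section Tree

variable {V : Type*} [Fintype V] (G : SimpleGraph V)

/-- The transmission of a vertex: the sum of its distances to all vertices. The centroid used to
find distant vertices is a minimizer of it. -/
noncomputable def distSum (x : V) : ℝ := ∑ z, (G.dist x z : ℝ)

/-- The closed form of the expected time the simple random walk on a tree, started at `x`, takes to
hit `w`. -/
noncomputable def treeHitTime (x w : V) : ℝ :=
  (Fintype.card V - 1) * G.dist x w + distSum G w - distSum G x

variable {G}

lemma treeHitTime_self (w : V) : treeHitTime G w w = 0 := by
  simp [treeHitTime]

lemma distSum_le_add (hG : G.Connected) (x y : V) :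
    distSum G x ≤ distSum G y + (Fintype.card V - 1) * G.dist x y := by
  classical
  have htri (z : V) : (G.dist x z : ℝ) ≤ G.dist y z + G.dist x y := by
    rw [add_comm]
    exact_mod_cast hG.dist_triangle
  calc distSum G x
      = ∑ z ∈ univ.erase x, (G.dist x z : ℝ) := (sum_erase _ (by simp)).symm
    _ ≤ ∑ z ∈ univ.erase x, ((G.dist y z : ℝ) + G.dist x y) := sum_le_sum fun z _ ↦ htri z
    _ = ∑ z ∈ univ.erase x, (G.dist y z : ℝ) + (Fintype.card V - 1) * G.dist x y := by
      rw [sum_add_distrib, sum_const, nsmul_eq_mul, cast_card_erase_of_mem (mem_univ x), card_univ]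
    _ ≤ distSum G y + (Fintype.card V - 1) * G.dist x y := by
      gcongr
      exact sum_le_univ_sum_of_nonneg fun _ ↦ Nat.cast_nonneg _

lemma treeHitTime_nonneg (hG : G.Connected) (x w : V) : 0 ≤ treeHitTime G x w := by
  have := distSum_le_add hG x w
  rw [treeHitTime]
  linarith

section HittingTime

variable [DecidableRel G.Adj]

lemma sum_neighborFinset_treeHitTime_sub (hT : G.IsTree) {x w : V} (hx : x ≠ w) :
    ∑ y ∈ G.neighborFinset x, (treeHitTime G y w - treeHitTime G x w) = -G.degree x := by
  classical
  have hsum : ∑ y ∈ G.neighborFinset x, (distSum G y - distSum G x) =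
      Fintype.card V * G.degree x - 2 * (Fintype.card V - 1) := calc
    _ = ∑ z, ∑ y ∈ G.neighborFinset x, ((G.dist z y : ℝ) - G.dist z x) := by
      simp_rw [distSum, ← sum_sub_distrib]
      rw [sum_comm]
      simp_rw [SimpleGraph.dist_comm]
    _ = ∑ z, ((G.degree x : ℝ) - 2 + if x = z then 2 else 0) := sum_congr rfl fun z _ ↦ by
      rw [sum_neighborFinset_dist_sub hT]
      split_ifs <;> ring
    _ = _ := by
      rw [sum_add_distrib, sum_const, sum_ite_eq, if_pos (mem_univ x), nsmul_eq_mul, card_univ]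
      ring
  calc ∑ y ∈ G.neighborFinset x, (treeHitTime G y w - treeHitTime G x w)
      = (Fintype.card V - 1) * ∑ y ∈ G.neighborFinset x, ((G.dist w y : ℝ) - G.dist w x) -
          ∑ y ∈ G.neighborFinset x, (distSum G y - distSum G x) := by
        rw [mul_sum, ← sum_sub_distrib]
        refine sum_congr rfl fun y _ ↦ ?_
        rw [treeHitTime, treeHitTime, SimpleGraph.dist_comm (u := y),
          SimpleGraph.dist_comm (u := x)]
        ring
    _ = -G.degree x := by
        rw [sum_neighborFinset_dist_sub hT, if_neg hx, hsum]
        ring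

lemma treeHitTime_eq_one_add (hT : G.IsTree) (hG : ∀ x, 0 < G.degree x) {x w : V} (hx : x ≠ w) :
    treeHitTime G x w =
      1 + (G.degree x : ℝ)⁻¹ * ∑ y ∈ G.neighborFinset x, treeHitTime G y w := by
  have hdeg : (G.degree x : ℝ) ≠ 0 := mod_cast (hG x).ne'
  have hsum := sum_neighborFinset_treeHitTime_sub hT hx
  rw [sum_sub_distrib, sum_const, nsmul_eq_mul, G.card_neighborFinset_eq_degree] at hsum
  field_simp
  linarith

theorem ofReal_treeHitTime_le_meanCover [DecidableEq V] (hT : G.IsTree)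
    (hG : ∀ x, 0 < G.degree x) (x w : V) :
    ENNReal.ofReal (treeHitTime G x w) ≤ meanCover (simpleWalk G hG) {w} x := by
  have hnonneg (y : V) : 0 ≤ treeHitTime G y w := treeHitTime_nonneg hT.connected y w
  let g (y : V) := ENNReal.ofReal (treeHitTime G y w)
  refine le_meanCover_singleton _ (g := g) (C := ∑ y, g y) (by simp [g])
    (fun y ↦ single_le_sum_of_canonicallyOrdered (mem_univ y)) (by simp [g, treeHitTime_self])
    (fun y hy ↦ ?_) x
  rw [tsum_simpleWalk_mul_ofReal hG hnonneg, ← ENNReal.ofReal_one,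
    ← ENNReal.ofReal_add zero_le_one
      (mul_nonneg (by positivity) (sum_nonneg fun u _ ↦ hnonneg u)),
    ← treeHitTime_eq_one_add hT hG hy]

end HittingTime

variable (G) in
/-- The vertices `z` such that `ρ` lies on a geodesic from `v` to `z`. For a centroid `ρ` of a tree
they are the candidates for vertices that take long to hit from `v`. -/
noncomputable def behind (v ρ : V) : Finset V := {z | G.dist v z = G.dist v ρ + G.dist ρ z}

lemma card_le_two_mul_card_behind (hT : G.IsTree) {ρ : V} (hρ : ∀ x, distSum G ρ ≤ distSum G x)
    (v : V) : Fintype.card V ≤ 2 * #(behind G v ρ) := by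
  classical
  obtain rfl | hne := eq_or_ne ρ v
  · have huniv : behind G ρ ρ = univ := by simp [behind]
    rw [huniv, card_univ]
    omega
  obtain ⟨c, hadj, hc⟩ := exists_adj_dist_eq_add_one (hT.connected v ρ) hne
  have hdiff (z : V) :
      (G.dist c z : ℝ) - G.dist ρ z ≤ (if z ∈ behind G v ρ then 2 else 0) - 1 := by
    rw [SimpleGraph.dist_comm (u := c), SimpleGraph.dist_comm (u := ρ)]
    obtain hz | hz := hT.dist_eq_dist_add_one_of_adj z hadj
    · rw [hz]
      split_ifs <;> push_cast <;> linarith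
    · rw [if_pos (by simpa [behind] using dist_eq_add_of_adj_of_dist_eq_add_one hT hadj hc hz), hz]
      push_cast
      linarith
  have hsum : 0 ≤ ∑ z, ((if z ∈ behind G v ρ then (2 : ℝ) else 0) - 1) := calc
    0 ≤ distSum G c - distSum G ρ := sub_nonneg.2 (hρ c)
    _ = ∑ z, ((G.dist c z : ℝ) - G.dist ρ z) := (sum_sub_distrib _ _).symm
    _ ≤ _ := sum_le_sum fun z _ ↦ hdiff z
  rw [sum_sub_distrib, ← sum_filter, filter_univ_mem, sum_const, sum_const, nsmul_eq_mul,
    nsmul_eq_mul, card_univ] at hsum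
  have : (Fintype.card V : ℝ) ≤ 2 * #(behind G v ρ) := by linarith
  exact_mod_cast this

lemma mul_dist_le_treeHitTime_of_mem_behind (hG : G.Connected) {ρ v w : V}
    (hρ : ∀ x, distSum G ρ ≤ distSum G x) (hw : w ∈ behind G v ρ) :
    (Fintype.card V - 1) * G.dist ρ w ≤ treeHitTime G v w := by
  have hdist : (G.dist v w : ℝ) = G.dist v ρ + G.dist ρ w := mod_cast (mem_filter_univ w).1 hw
  have := distSum_le_add hG v ρ
  have := hρ w
  rw [treeHitTime, hdist]
  linarith

lemma exists_mul_le_treeHitTime_or_exists_pairwise (hT : G.IsTree) [Nontrivial V] (v : V) (R : ℕ) :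
    (∃ w, (Fintype.card V - 1) * R ≤ treeHitTime G v w) ∨
      ∃ U : Finset V, Fintype.card V ≤ 4 * R * #U ∧ (U : Set V).Pairwise fun x y ↦
        (Fintype.card V - 1) * (G.dist x y : ℝ) / 2 ≤ treeHitTime G x y := by
  have hn : (0 : ℝ) < Fintype.card V - 1 := sub_pos.2 (mod_cast Fintype.one_lt_card)
  obtain ⟨ρ, hρ⟩ := Finite.exists_min (distSum G)
  by_cases hfar : ∃ w ∈ behind G v ρ, R ≤ G.dist ρ w
  · obtain ⟨w, hw, hR⟩ := hfar
    refine .inl ⟨w, le_trans ?_ (mul_dist_le_treeHitTime_of_mem_behind hT.connected hρ hw)⟩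
    gcongr
  push Not at hfar
  have hrange : ∀ x ∈ behind G v ρ, distSum G x ∈
      Set.Ico (distSum G ρ) (distSum G ρ + (2 * R : ℕ) * ((Fintype.card V - 1) / 2)) := by
    intro x hx
    have hlt : (G.dist ρ x : ℝ) < R := mod_cast hfar x hx
    have hle := distSum_le_add hT.connected x ρ
    rw [SimpleGraph.dist_comm] at hle
    refine ⟨hρ x, hle.trans_lt ?_⟩
    push_cast
    linarith [mul_lt_mul_of_pos_left hlt hn]
  obtain ⟨U, -, hcard, hU⟩ := exists_subset_sub_le_of_mem_Ico (half_pos hn) hrange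
  refine .inr ⟨U, ?_, fun x hx y hy hxy ↦ ?_⟩
  · linarith [card_le_two_mul_card_behind hT hρ v]
  · have hdist : (1 : ℝ) ≤ G.dist x y := mod_cast hT.connected.pos_dist_of_ne hxy
    have := hU x hx y hy
    have := le_mul_of_one_le_right hn.le hdist
    simp only [treeHitTime]
    linarith

lemma exists_subset_pairwise_lt_dist [DecidableRel G.Adj] (hG : G.Connected) {M : ℕ}
    (hM : ∀ v, G.degree v ≤ M) (U : Finset V) (k : ℕ) :
    ∃ A ⊆ U, (A : Set V).Pairwise (fun x y ↦ k < G.dist x y) ∧ #U ≤ #A * (M + 1) ^ k := by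
  classical
  obtain ⟨A, hAU, hA, hdom⟩ := exists_subset_pairwise_not_and_dominating
    (r := fun x y ↦ G.dist x y ≤ k) (by simp) (fun x y h ↦ by rwa [SimpleGraph.dist_comm]) U
  refine ⟨A, hAU, fun x hx y hy hxy ↦ not_le.1 (hA hx hy hxy), ?_⟩
  have hsub : U ⊆ A.biUnion fun a ↦ {y | G.dist a y ≤ k} := fun u hu ↦ by
    simpa using hdom u hu
  exact (card_le_card hsub).trans
    (card_biUnion_le_card_mul _ _ _ fun a _ ↦ card_filter_dist_le_le hG hM a k)

theorem mul_le_meanCover_or_exists_mul_log_le_meanCover [Nontrivial V] [DecidableEq V]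
    [DecidableRel G.Adj] (hT : G.IsTree) (hG : ∀ x, 0 < G.degree x) {M : ℕ}
    (hM : ∀ v, G.degree v ≤ M) (v : V) (R k : ℕ) :
    ENNReal.ofReal ((Fintype.card V - 1) * R) ≤ meanCover (simpleWalk G hG) univ v ∨
      ∃ m : ℕ, Fintype.card V ≤ 4 * R * (M + 1) ^ k * m ∧
        ENNReal.ofReal ((Fintype.card V - 1) * (k + 1) / 2 * (Real.log (m + 1) - 1)) ≤
          meanCover (simpleWalk G hG) univ v := by
  have hn : (0 : ℝ) ≤ Fintype.card V - 1 := sub_nonneg.2 (mod_cast Fintype.one_lt_card.le)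
  obtain ⟨w, hw⟩ | ⟨U, hcard, hU⟩ := exists_mul_le_treeHitTime_or_exists_pairwise hT v R
  · exact .inl <| (ENNReal.ofReal_le_ofReal hw).trans <|
      (ofReal_treeHitTime_le_meanCover hT hG v w).trans (meanCover_mono _ (subset_univ _) v)
  obtain ⟨A, hAU, hA, hUA⟩ := exists_subset_pairwise_lt_dist hT.connected hM U k
  refine .inr ⟨#A, ?_, ?_⟩
  · calc Fintype.card V ≤ 4 * R * #U := hcard
      _ ≤ 4 * R * (#A * (M + 1) ^ k) := by gcongr
      _ = 4 * R * (M + 1) ^ k * #A := by ring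
  have hhit : (A : Set V).Pairwise fun y z ↦ ENNReal.ofReal ((Fintype.card V - 1) * (k + 1) / 2) ≤
      meanCover (simpleWalk G hG) {z} y := fun y hy z hz hyz ↦ by
    have hdist : (k : ℝ) + 1 ≤ G.dist y z := mod_cast hA hy hz hyz
    refine (ENNReal.ofReal_le_ofReal (le_trans ?_ (hU (hAU hy) (hAU hz) hyz))).trans
      (ofReal_treeHitTime_le_meanCover hT hG y z)
    gcongr
  rw [ENNReal.ofReal_mul (by positivity)]
  exact (mul_log_card_le_meanCover _ ENNReal.ofReal_ne_top hhit v).trans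
    (meanCover_mono _ (subset_univ A) v)

end Tree

section Estimates

variable {n : ℝ}

lemma exp_log_div_four_pow_four (hn : 0 < n) : Real.exp (Real.log n / 4) ^ 4 = n := by
  rw [← Real.exp_nat_mul, Nat.cast_ofNat, mul_div_cancel₀ _ four_ne_zero, Real.exp_log hn]

lemma half_le_log_natCast_add_two (M : ℕ) : 1 / 2 ≤ Real.log (M + 2) := by
  have := Real.log_two_gt_d9
  have : Real.log 2 ≤ Real.log (M + 2) := Real.log_le_log two_pos (by simp)
  linarith

lemma add_one_pow_floor_le_exp (M : ℕ) {L : ℝ} (hL : 0 ≤ L) :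
    ((M : ℝ) + 1) ^ ⌊L / (4 * Real.log (M + 2))⌋₊ ≤ Real.exp (L / 4) := by
  have hg : 0 < Real.log (M + 2) := one_half_pos.trans_le (half_le_log_natCast_add_two M)
  have hfloor := Nat.floor_le (show 0 ≤ L / (4 * Real.log (M + 2)) by positivity)
  rw [le_div_iff₀ (by positivity)] at hfloor
  calc ((M : ℝ) + 1) ^ ⌊L / (4 * Real.log (M + 2))⌋₊
      ≤ ((M : ℝ) + 2) ^ ⌊L / (4 * Real.log (M + 2))⌋₊ := by gcongr; norm_num
    _ = Real.exp (⌊L / (4 * Real.log (M + 2))⌋₊ * Real.log (M + 2)) := by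
      rw [Real.exp_nat_mul, Real.exp_log (by positivity)]
    _ ≤ Real.exp (L / 4) := Real.exp_le_exp.2 (by linarith)

-- The threshold `13` only has to be at least `4 + 12 * Real.log 2`.
lemma log_div_four_le_log_add_one_sub_one (hn : 0 < n) (hlog : 13 ≤ Real.log n) {R B m : ℝ}
    (hR : R ≤ 2 * Real.exp (Real.log n / 4)) (hB₀ : 0 ≤ B) (hB : B ≤ Real.exp (Real.log n / 4))
    (hm : 0 ≤ m) (h : n ≤ 4 * R * B * m) : Real.log n / 4 ≤ Real.log (m + 1) - 1 := by
  set t := Real.exp (Real.log n / 4) with ht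
  have ht₀ : 0 < t := Real.exp_pos _
  have hle : t ^ 2 ≤ 8 * m := by
    refine le_of_mul_le_mul_left ?_ (pow_pos ht₀ 2)
    calc t ^ 2 * t ^ 2 = n := by rw [← pow_add, exp_log_div_four_pow_four hn]
      _ ≤ 4 * (2 * t) * t * m := h.trans (by gcongr)
      _ = t ^ 2 * (8 * m) := by ring
  have hexp : 8 * Real.exp (Real.log n / 4 + 1) ≤ t ^ 2 := by
    rw [ht, ← Real.exp_nat_mul, ← Real.exp_log (show (0 : ℝ) < 8 by norm_num), ← Real.exp_add,
      Real.exp_le_exp, show (8 : ℝ) = 2 ^ 3 by norm_num, Real.log_pow]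
    push_cast
    linarith [Real.log_two_lt_d9]
  rw [le_sub_iff_add_le, Real.le_log_iff_exp_le (by positivity)]
  linarith

lemma mul_log_sq_div_le_sub_one_mul (hn : 2 ≤ n) {g R : ℝ} (hg : 1 / 2 ≤ g)
    (hR : Real.exp (Real.log n / 4) ≤ R) : n * Real.log n ^ 2 / (128 * g) ≤ (n - 1) * R := by
  have hexp := Real.pow_div_factorial_le_exp (Real.log n / 4)
    (div_nonneg (Real.log_nonneg (by linarith)) zero_le_four) 2
  have hsq : Real.log n ^ 2 ≤ 32 * R := by
    push_cast [Nat.factorial_two] at hexp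
    linarith
  have hR₀ : 0 ≤ R := (Real.exp_pos _).le.trans hR
  calc n * Real.log n ^ 2 / (128 * g) ≤ n * (32 * R) / (128 * (1 / 2)) := by gcongr
    _ = n / 2 * R := by ring
    _ ≤ (n - 1) * R := by
      gcongr
      linarith

lemma mul_log_sq_div_le_sub_one_mul_mul (hn : 2 ≤ n) {g k ℓ : ℝ} (hg : 0 < g)
    (hk : Real.log n / (4 * g) ≤ k) (hℓ : Real.log n / 4 ≤ ℓ) :
    n * Real.log n ^ 2 / (128 * g) ≤ (n - 1) * k / 2 * ℓ := by
  have hlog : 0 ≤ Real.log n := Real.log_nonneg (by linarith)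
  have hk₀ : 0 ≤ k := le_trans (by positivity) hk
  have hn₀ : 0 ≤ n - 1 := by linarith
  calc n * Real.log n ^ 2 / (128 * g)
      ≤ n * Real.log n ^ 2 / (64 * g) := by gcongr; norm_num
    _ = n / 2 * (Real.log n / (4 * g)) / 2 * (Real.log n / 4) := by ring
    _ ≤ (n - 1) * k / 2 * ℓ := by
      gcongr
      linarith

lemma exp_neg_mul_log_sq_div_le_one (hn : 1 ≤ n) (hlog : Real.log n ≤ 13) {g : ℝ}
    (hg : 1 / 2 ≤ g) : Real.exp (-13) / 338 * n * Real.log n ^ 2 / g ≤ 1 := by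
  have hexp : Real.exp (-13) * n ≤ 1 := calc
    Real.exp (-13) * n = Real.exp (Real.log n - 13) := by
      rw [sub_eq_neg_add, Real.exp_add, Real.exp_log (by positivity)]
    _ ≤ 1 := Real.exp_le_one_iff.2 (by linarith)
  have := Real.log_nonneg hn
  calc Real.exp (-13) / 338 * n * Real.log n ^ 2 / g
      = Real.exp (-13) * n * Real.log n ^ 2 / (338 * g) := by ring
    _ ≤ 1 * 13 ^ 2 / (338 * (1 / 2)) := by gcongr
    _ = 1 := by norm_num

end Estimates

theorem ofReal_mul_log_sq_div_le_meanCover {V : Type*} [Fintype V] [DecidableEq V] [Nontrivial V]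
    {G : SimpleGraph V} [DecidableRel G.Adj] (hT : G.IsTree) (hG : ∀ x, 0 < G.degree x) {M : ℕ}
    (hM : ∀ v, G.degree v ≤ M) (hlog : 13 ≤ Real.log (Fintype.card V)) (v : V) :
    ENNReal.ofReal (Fintype.card V * Real.log (Fintype.card V) ^ 2 / (128 * Real.log (M + 2))) ≤
      meanCover (simpleWalk G hG) univ v := by
  have hn : (2 : ℝ) ≤ Fintype.card V := mod_cast Fintype.one_lt_card
  have hg := half_le_log_natCast_add_two M
  set L := Real.log (Fintype.card V)
  set R := ⌈Real.exp (L / 4)⌉₊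
  set k := ⌊L / (4 * Real.log (M + 2))⌋₊
  obtain hfar | ⟨m, hm, hspread⟩ :=
    mul_le_meanCover_or_exists_mul_log_le_meanCover hT hG hM v R k
  · exact (ENNReal.ofReal_le_ofReal
      (mul_log_sq_div_le_sub_one_mul hn hg (Nat.le_ceil _))).trans hfar
  · have hcard : (Fintype.card V : ℝ) ≤ 4 * R * (M + 1) ^ k * m := mod_cast hm
    have hR : (R : ℝ) ≤ 2 * Real.exp (L / 4) :=
      Nat.ceil_le_two_mul (by linarith [Real.add_one_le_exp (L / 4)])
    have hlogm : L / 4 ≤ Real.log (m + 1) - 1 :=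
      log_div_four_le_log_add_one_sub_one (by linarith) hlog hR (by positivity)
        (add_one_pow_floor_le_exp M (by linarith)) (by positivity) hcard
    exact (ENNReal.ofReal_le_ofReal (mul_log_sq_div_le_sub_one_mul_mul hn (by linarith)
      (Nat.lt_floor_add_one _).le hlogm)).trans hspread

/-- There is an absolute constant `c' > 0` such that for every finite
tree with `n ≥ 2` vertices and maximal degree at most `M`, and every start vertex `v`,
the expected cover time from `v` is at least `c' · n · (log n)² / log (M+2)`. -/
theorem cover_time_lower_bound_tree :
    ∃ c' : ℝ, 0 < c' ∧
      ∀ (V : Type) (_ : Fintype V) (_ : DecidableEq V) (G : SimpleGraph V)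
        (_ : DecidableRel G.Adj) (M : ℕ),
        G.IsTree → 2 ≤ Fintype.card V → (∀ v : V, G.degree v ≤ M) →
        ∀ v : V,
          ENNReal.ofReal
              (c' * (Fintype.card V : ℝ) * Real.log (Fintype.card V) ^ 2
                / Real.log ((M : ℝ) + 2))
            ≤ expCover G v := by
  refine ⟨Real.exp (-13) / 338, by positivity, ?_⟩
  intro V _ _ G _ M hT hn hM v
  have : Nontrivial V := Fintype.one_lt_card_iff_nontrivial.1 hn
  have hG (x : V) : 0 < G.degree x := hT.connected.preconnected.degree_pos_of_nontrivial x
  have hn₁ : (1 : ℝ) ≤ Fintype.card V := mod_cast one_le_two.trans hn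
  have hg := half_le_log_natCast_add_two M
  rw [expCover_eq_meanCover hG]
  obtain hlog | hlog := le_total (Real.log (Fintype.card V)) 13
  · calc
      _ ≤ ENNReal.ofReal 1 := ENNReal.ofReal_le_ofReal (exp_neg_mul_log_sq_div_le_one hn₁ hlog hg)
      _ = 1 := ENNReal.ofReal_one
      _ ≤ _ := one_le_meanCover _ fun h ↦ by simpa using hn.trans (card_le_card h)
  · refine le_trans (ENNReal.ofReal_le_ofReal ?_)
      (ofReal_mul_log_sq_div_le_meanCover hT hG hM hlog v)
    have hc : Real.exp (-13) / 338 ≤ 1 / 128 := by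
      linarith [Real.exp_le_one_iff.2 (show (-13 : ℝ) ≤ 0 by norm_num)]
    calc
      _ ≤ 1 / 128 * (Fintype.card V : ℝ) * Real.log (Fintype.card V) ^ 2 / Real.log (M + 2) := by
        gcongr
      _ = _ := by ring
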